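/- Let i ≥ 2 and j ≥ 1 be integers. Let r_i, r_j be independent random variables with r_i ∼ χ_{2i}, r_j ∼ χ_{2j}, and let r_2, r_j' be independent with r_2 ∼ χ_4, r_j' ∼ χ_{2j}. Then E[ln(r_i r_j/(r_i + r_j))] ≥ E[ln(r_2 r_j'/(r_2 + r_j'))] − (1/2) ln 2; explicitly, ∫_0^∞ ∫_0^∞ ln(√x·√y/(√x+√y)) ρ_i(x) ρ_j(y) dx dy ≥ ∫_0^∞ ∫_0^∞ ln(√x·√y/(√x+√y)) ρ_2(x) ρ_j(y) dx dy − (1/2) ln 2. -/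

import Mathlib

open MeasureTheory Finset

/-- Density of the chi-squared distribution with `2m` degrees of freedom:
`ρ_m(q) = q^{m−1} e^{−q/2} / (2^m (m−1)!)` on `(0,∞)`. -/
noncomputable def chi2Density (m : ℕ) (q : ℝ) : ℝ :=
  q ^ (m - 1) * Real.exp (-q / 2) / (2 ^ m * Nat.factorial (m - 1))

lemma aux_rpow_integrable (s : ℝ) (hs : -1 < s) :
    IntegrableOn (fun x : ℝ => x ^ s * Real.exp (-x / 2)) (Set.Ioi 0) := by
  have h := integrableOn_rpow_mul_exp_neg_mul_rpow (s := s) (p := 1) (b := 1 / 2) hs one_pos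
    (by norm_num)
  refine h.congr_fun ?_ measurableSet_Ioi
  intro x hx
  simp only [Real.rpow_one]
  congr 2
  ring

lemma aux_pow_integrable (k : ℕ) :
    IntegrableOn (fun x : ℝ => x ^ k * Real.exp (-x / 2)) (Set.Ioi 0) := by
  have h := aux_rpow_integrable (k : ℝ) (by have : (0:ℝ) ≤ k := Nat.cast_nonneg k
                                            linarith)
  simpa only [Real.rpow_natCast] using h

lemma chi2_integrable (m : ℕ) : IntegrableOn (chi2Density m) (Set.Ioi 0) := by
  unfold chi2Density
  exact (aux_pow_integrable (m - 1)).div_const _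

lemma chi2_nonneg (m : ℕ) (x : ℝ) (hx : 0 < x) : 0 ≤ chi2Density m x := by
  unfold chi2Density
  positivity

lemma chi2_continuous (m : ℕ) : Continuous (chi2Density m) := by
  unfold chi2Density
  fun_prop

lemma chi2_integral (m : ℕ) (hm : 1 ≤ m) : ∫ x in Set.Ioi (0:ℝ), chi2Density m x = 1 := by
  obtain ⟨k, rfl⟩ : ∃ k, m = k + 1 := ⟨m - 1, by omega⟩
  unfold chi2Density
  simp only [Nat.add_sub_cancel]
  rw [integral_div]
  have h := Real.integral_rpow_mul_exp_neg_mul_Ioi (a := (k:ℝ) + 1) (r := 1 / 2)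
    (by positivity) (by norm_num)
  have e : ∫ x in Set.Ioi (0:ℝ), x ^ k * Real.exp (-x / 2) = 2 ^ (k + 1) * (Nat.factorial k : ℝ) := by
    rw [Real.Gamma_nat_eq_factorial] at h
    rw [show (1 / (1 / 2 : ℝ)) = 2 by norm_num] at h
    have h2 : (2:ℝ) ^ ((k:ℝ) + 1) = 2 ^ (k + 1) := by
      rw [← Real.rpow_natCast]; push_cast; rfl
    rw [h2] at h
    rw [← h]
    refine setIntegral_congr_fun measurableSet_Ioi ?_
    intro x hx
    simp only [add_sub_cancel_right, Real.rpow_natCast]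
    congr 2
    ring
  rw [e]
  exact div_self (by positivity)

lemma abs_log_bound (x : ℝ) (hx : 0 < x) : |Real.log x| ≤ x + 2 * x ^ (-(1/2) : ℝ) := by
  have h1 := Real.log_le_sub_one_of_pos hx
  have hp : 0 < x ^ (-(1/2) : ℝ) := Real.rpow_pos_of_pos hx _
  have h2 := Real.log_le_sub_one_of_pos hp
  rw [Real.log_rpow hx] at h2
  rw [abs_le]
  constructor <;> linarith

lemma log_chi2_integrable (m : ℕ) :
    IntegrableOn (fun x => |Real.log x| * chi2Density m x) (Set.Ioi 0) := by
  have hb : IntegrableOn (fun x : ℝ => (x ^ (m - 1 + 1) * Real.exp (-x / 2)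
      + 2 * (x ^ (((m - 1 : ℕ) : ℝ) + -(1/2)) * Real.exp (-x / 2))) /
        (2 ^ m * Nat.factorial (m - 1))) (Set.Ioi 0) := by
    refine Integrable.div_const ((aux_pow_integrable _).add
      ((aux_rpow_integrable _ ?_).const_mul 2)) _
    have : (0:ℝ) ≤ (m - 1 : ℕ) := Nat.cast_nonneg _
    linarith
  refine Integrable.mono' hb ?_ ?_
  · exact ((Real.measurable_log.norm).mul (chi2_continuous m).measurable).aestronglyMeasurable
  · refine (ae_restrict_iff' measurableSet_Ioi).2 (Filter.Eventually.of_forall ?_)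
    intro x hx
    have hx' : 0 < x := hx
    have h := abs_log_bound x hx'
    have hc := chi2_nonneg m x hx'
    rw [Real.norm_of_nonneg (mul_nonneg (abs_nonneg _) hc)]
    refine (mul_le_mul_of_nonneg_right h hc).trans (le_of_eq ?_)
    rw [Real.rpow_add hx', Real.rpow_natCast, pow_succ]
    unfold chi2Density
    ring

/-- log of the harmonic-type mean -/
noncomputable def hL (x y : ℝ) : ℝ :=
  Real.log (Real.sqrt x * Real.sqrt y / (Real.sqrt x + Real.sqrt y))

lemma hL_mono (x x' y : ℝ) (hx : 0 < x) (hxx : x ≤ x') (hy : 0 < y) : hL x y ≤ hL x' y := by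
  unfold hL
  have a := Real.sqrt_pos.2 hx
  have b := Real.sqrt_pos.2 hy
  have c := Real.sqrt_le_sqrt hxx
  have d : 0 < √x' := a.trans_le c
  apply Real.log_le_log (by positivity)
  rw [div_le_div_iff₀ (by positivity) (by positivity)]
  nlinarith [mul_le_mul_of_nonneg_right c (mul_pos b b).le]

lemma hL_bound (x y : ℝ) (hx : 0 < x) (hy : 0 < y) :
    |hL x y| ≤ |Real.log x| + |Real.log y| + Real.log 2 := by
  unfold hL
  have a := Real.sqrt_pos.2 hx
  have b := Real.sqrt_pos.2 hy
  have l2 : 0 < Real.log 2 := Real.log_pos (by norm_num)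
  have lx := Real.log_sqrt hx.le
  have ly := Real.log_sqrt hy.le
  have e1 := neg_abs_le (Real.log x)
  have e2 := neg_abs_le (Real.log y)
  have e3 := le_abs_self (Real.log x)
  have e4 := le_abs_self (Real.log y)
  have e5 := abs_nonneg (Real.log x)
  have e6 := abs_nonneg (Real.log y)
  rw [Real.log_div (by positivity) (by positivity), Real.log_mul a.ne' b.ne', lx, ly, abs_le]
  have u1 : Real.log √x ≤ Real.log (√x + √y) := Real.log_le_log a (by linarith)
  rw [lx] at u1
  constructor
  · rcases le_total √x √y with h | h
    · have : Real.log (√x + √y) ≤ Real.log (2 * √y) :=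
        Real.log_le_log (by positivity) (by linarith)
      rw [Real.log_mul (by norm_num) b.ne', ly] at this
      linarith
    · have : Real.log (√x + √y) ≤ Real.log (2 * √x) :=
        Real.log_le_log (by positivity) (by linarith)
      rw [Real.log_mul (by norm_num) a.ne', lx] at this
      linarith
  · linarith

lemma hL_integrable (j : ℕ) (x : ℝ) (hx : 0 < x) :
    IntegrableOn (fun y => hL x y * chi2Density j y) (Set.Ioi 0) := by
  have hb : IntegrableOn (fun y => (|Real.log x| + Real.log 2) * chi2Density j y +
      |Real.log y| * chi2Density j y) (Set.Ioi 0) :=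
    ((chi2_integrable j).const_mul _).add (log_chi2_integrable j)
  refine Integrable.mono' hb ?_ ?_
  · apply Measurable.aestronglyMeasurable
    have := (chi2_continuous j).measurable
    unfold hL
    fun_prop
  · refine (ae_restrict_iff' measurableSet_Ioi).2 (Filter.Eventually.of_forall ?_)
    intro y hy
    have hc := chi2_nonneg j y hy
    rw [norm_mul, Real.norm_of_nonneg hc, Real.norm_eq_abs]
    refine (mul_le_mul_of_nonneg_right (hL_bound x y hx hy) hc).trans (le_of_eq ?_)
    ring

/-- the inner integral -/
noncomputable def hG (j : ℕ) (x : ℝ) : ℝ := ∫ y in Set.Ioi (0:ℝ), hL x y * chi2Density j y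

lemma hG_mono (j : ℕ) : MonotoneOn (hG j) (Set.Ioi 0) := by
  intro x hx x' hx' h
  refine setIntegral_mono_on (hL_integrable j x hx) (hL_integrable j x' hx') measurableSet_Ioi ?_
  intro y hy
  exact mul_le_mul_of_nonneg_right (hL_mono x x' y hx h hy) (chi2_nonneg j y hy)

lemma hG_bound (j : ℕ) (hj : 1 ≤ j) : ∃ C : ℝ, ∀ x, 0 < x → |hG j x| ≤ |Real.log x| + C := by
  refine ⟨Real.log 2 + ∫ y in Set.Ioi (0:ℝ), |Real.log y| * chi2Density j y, ?_⟩
  intro x hx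
  have i1 := (chi2_integrable j).const_mul (|Real.log x| + Real.log 2)
  have i2 := log_chi2_integrable j
  have h : |hG j x| ≤ ∫ y in Set.Ioi (0:ℝ), ((|Real.log x| + Real.log 2) * chi2Density j y +
      |Real.log y| * chi2Density j y) := by
    rw [← Real.norm_eq_abs, hG]
    refine norm_integral_le_of_norm_le (i1.add i2) ?_
    refine (ae_restrict_iff' measurableSet_Ioi).2 (Filter.Eventually.of_forall ?_)
    intro y hy
    have hc := chi2_nonneg j y hy
    rw [norm_mul, Real.norm_of_nonneg hc, Real.norm_eq_abs]
    refine (mul_le_mul_of_nonneg_right (hL_bound x y hx hy) hc).trans (le_of_eq ?_)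
    ring
  rw [integral_add i1 i2, integral_const_mul, chi2_integral j hj] at h
  linarith

lemma hG_integrable (j m : ℕ) (hj : 1 ≤ j) :
    IntegrableOn (fun x => hG j x * chi2Density m x) (Set.Ioi 0) := by
  obtain ⟨C, hC⟩ := hG_bound j hj
  have hb : IntegrableOn (fun x => |Real.log x| * chi2Density m x + C * chi2Density m x)
      (Set.Ioi 0) := (log_chi2_integrable m).add ((chi2_integrable m).const_mul C)
  refine Integrable.mono' hb ?_ ?_
  · exact ((aemeasurable_restrict_of_monotoneOn measurableSet_Ioi (hG_mono j)).mul
      (chi2_continuous m).measurable.aemeasurable).aestronglyMeasurable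
  · refine (ae_restrict_iff' measurableSet_Ioi).2 (Filter.Eventually.of_forall ?_)
    intro x hx
    have hc := chi2_nonneg m x hx
    rw [norm_mul, Real.norm_of_nonneg hc, Real.norm_eq_abs]
    refine (mul_le_mul_of_nonneg_right (hC x hx) hc).trans (le_of_eq ?_)
    ring

lemma chi2_succ (m : ℕ) (hm : 1 ≤ m) (x : ℝ) :
    chi2Density (m + 1) x = x / (2 * m) * chi2Density m x := by
  obtain ⟨k, rfl⟩ : ∃ k, m = k + 1 := ⟨m - 1, by omega⟩
  unfold chi2Density
  simp only [Nat.add_sub_cancel, Nat.factorial_succ]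
  have : (Nat.factorial k : ℝ) ≠ 0 := by positivity
  have : (k : ℝ) + 1 ≠ 0 := by positivity
  push_cast
  field_simp
  ring

lemma step (j m : ℕ) (hj : 1 ≤ j) (hm : 1 ≤ m) :
    ∫ x in Set.Ioi (0:ℝ), hG j x * chi2Density m x ≤
      ∫ x in Set.Ioi (0:ℝ), hG j x * chi2Density (m + 1) x := by
  have a1 := hG_integrable j (m + 1) hj
  have a2 := hG_integrable j m hj
  have b1 := (chi2_integrable (m + 1)).const_mul (hG j (2 * m))
  have b2 := (chi2_integrable m).const_mul (hG j (2 * m))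
  have hm' : (0:ℝ) < 2 * m := by positivity
  have h : ∫ x in Set.Ioi (0:ℝ), (hG j x * chi2Density m x + hG j (2 * m) * chi2Density (m + 1) x)
      ≤ ∫ x in Set.Ioi (0:ℝ), (hG j x * chi2Density (m + 1) x + hG j (2 * m) * chi2Density m x) := by
    refine setIntegral_mono_on (a2.add b1) (a1.add b2) measurableSet_Ioi ?_
    intro x hx
    have hc := chi2_nonneg m x hx
    rw [chi2_succ m hm]
    have key : 0 ≤ (hG j x - hG j (2 * m)) * (x / (2 * m) - 1) := by
      rcases le_total x (2 * m) with h | h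
      · have := hG_mono j hx hm' h
        have h3 : x / (2 * m) ≤ 1 := (div_le_one hm').2 h
        exact mul_nonneg_of_nonpos_of_nonpos (by linarith) (by linarith)
      · have := hG_mono j hm' hx h
        have h3 : 1 ≤ x / (2 * m) := (one_le_div hm').2 h
        exact mul_nonneg (by linarith) (by linarith)
    have := mul_nonneg key hc
    linarith
  rw [integral_add a2 b1, integral_add a1 b2, integral_const_mul, integral_const_mul,
    chi2_integral m hm, chi2_integral (m + 1) (by omega)] at h
  linarith

lemma rewrite_int (i j : ℕ) :
    (∫ x in Set.Ioi (0 : ℝ), ∫ y in Set.Ioi (0 : ℝ),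
        Real.log (Real.sqrt x * Real.sqrt y / (Real.sqrt x + Real.sqrt y)) *
          (chi2Density i x * chi2Density j y)) =
    ∫ x in Set.Ioi (0:ℝ), hG j x * chi2Density i x := by
  congr 1
  funext x
  unfold hG hL
  rw [← integral_mul_const]
  congr 1
  funext y
  ring

theorem expectation_log_harmonicmean_chi (i j : ℕ) (hi : 2 ≤ i) (hj : 1 ≤ j) :
    (∫ x in Set.Ioi (0 : ℝ), ∫ y in Set.Ioi (0 : ℝ),
        Real.log (Real.sqrt x * Real.sqrt y / (Real.sqrt x + Real.sqrt y)) *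
          (chi2Density i x * chi2Density j y)) ≥
    (∫ x in Set.Ioi (0 : ℝ), ∫ y in Set.Ioi (0 : ℝ),
        Real.log (Real.sqrt x * Real.sqrt y / (Real.sqrt x + Real.sqrt y)) *
          (chi2Density 2 x * chi2Density j y)) - (1 / 2) * Real.log 2 := by
  rw [rewrite_int, rewrite_int]
  have l2 : 0 < Real.log 2 := Real.log_pos (by norm_num)
  have h : ∫ x in Set.Ioi (0:ℝ), hG j x * chi2Density 2 x ≤
      ∫ x in Set.Ioi (0:ℝ), hG j x * chi2Density i x := by
    induction i, hi using Nat.le_induction with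
    | base => exact le_rfl
    | succ n hn ih => exact ih.trans (step j n hj (by omega))
  linarith
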